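/- Let R be a Noetherian ring of finite Krull dimension d, and for a finitely generated R-module M, let a(M) denote the maximal rank of a free direct summand of M and ã(M) the maximal min-rank of a projective direct summand of M (min-rank = minimum over primes of the local rank). Then a(M) ≤ ã(M) ≤ a(M) + d. -/

import Mathlib

/-- The free rank of a module: the maximal rank of a free direct summand. -/
noncomputable def frk (R M : Type*) [CommRing R] [AddCommGroup M] [Module R M] : ℕ :=
  sSup {n : ℕ | ∃ N N' : Submodule R M, IsCompl N N' ∧ Nonempty (N ≃ₗ[R] (Fin n → R))}

/-- The maximal min-rank of a projective direct summand of a module, where the min-rank of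
a projective module is the minimum over all primes `P` of the rank of its localization at
`P` (as a module over the localized ring). -/
noncomputable def projMinRank (R M : Type*) [CommRing R] [AddCommGroup M] [Module R M] : ℕ :=
  sSup {n : ℕ | ∃ Ω N : Submodule R M, IsCompl Ω N ∧ Module.Projective R Ω ∧
    ∀ (P : Ideal R) (hP : P.IsPrime),
      n ≤ Module.finrank (Localization (@Ideal.primeCompl R _ P hP))
        (LocalizedModule (@Ideal.primeCompl R _ P hP) Ω)}

/-- The dimension of the span of the images of the vectors `u i` over the residue field at `p`. -/
noncomputable def fibreRank {R ι κ : Type*} [CommRing R] (u : ι → κ → R)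
    (p : PrimeSpectrum R) : ℕ :=
  Set.finrank p.asIdeal.ResidueField
    (Set.range fun i j => algebraMap R p.asIdeal.ResidueField (u i j))

/-- A matrix over a residue field is, up to a nonzero scalar, the image of a matrix over `R`. -/
lemma exists_smul_eq_map_residueField {R m n : Type*} [CommRing R] [Finite m] [Finite n]
    (p : PrimeSpectrum R) (B : Matrix m n p.asIdeal.ResidueField) :
    ∃ c : p.asIdeal.ResidueField, c ≠ 0 ∧ ∃ B' : Matrix m n R,
      B'.map (algebraMap R p.asIdeal.ResidueField) = c • B := by
  obtain ⟨b, hb⟩ := IsLocalization.exist_integer_multiples_of_finite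
    (nonZeroDivisors (R ⧸ p.asIdeal)) (fun x : m × n => B x.1 x.2)
  choose g hg using hb
  choose g' hg' using fun x => Ideal.Quotient.mk_surjective (g x)
  refine ⟨algebraMap (R ⧸ p.asIdeal) _ b, ?_, Matrix.of fun i j => g' (i, j), ?_⟩
  · exact IsFractionRing.to_map_ne_zero_of_mem_nonZeroDivisors b.2
  · ext i j
    have := hg (i, j)
    rw [← hg'] at this
    simpa [Algebra.smul_def] using this

/-- The fibre rank is lower semicontinuous. -/
lemma isOpen_le_fibreRank {R ι κ : Type*} [CommRing R] [Finite κ]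
    (u : ι → κ → R) (t : ℕ) : IsOpen {p | t ≤ fibreRank u p} := by
  classical
  cases nonempty_fintype κ
  refine isOpen_iff_forall_mem_open.mpr fun p (hp : t ≤ _) => ?_
  obtain ⟨r, f, hr, hf, hli⟩ : ∃ r, ∃ f : Fin r → κ → p.asIdeal.ResidueField, t ≤ r ∧
      (∀ i, f i ∈ Set.range fun i j => algebraMap R p.asIdeal.ResidueField (u i j)) ∧
      LinearIndependent p.asIdeal.ResidueField f := by
    obtain ⟨f, hf, -, hli⟩ := Submodule.exists_fun_fin_finrank_span_eq p.asIdeal.ResidueField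
      (Set.range fun i j => algebraMap R p.asIdeal.ResidueField (u i j))
    exact ⟨_, f, hp, hf, hli⟩
  choose s hs using hf
  let A : Matrix (Fin r) κ R := fun i => u (s i)
  have hA : A.map (algebraMap R p.asIdeal.ResidueField) = Matrix.of f := by
    ext i j
    exact congrFun (hs i) j
  obtain ⟨B, hB⟩ : ∃ B : Matrix κ (Fin r) p.asIdeal.ResidueField, Matrix.of f * B = 1 := by
    have hinj : Function.Injective (Matrix.vecMulLinear (Matrix.of f)) :=
      Matrix.vecMul_injective_iff.mpr hli
    obtain ⟨g, hg⟩ := LinearMap.exists_leftInverse_of_injective _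
      (LinearMap.ker_eq_bot.mpr hinj)
    refine ⟨(LinearMap.toMatrix' g).transpose, ?_⟩
    have h2 := congrArg LinearMap.toMatrix' hg
    rw [LinearMap.toMatrix'_comp, LinearMap.toMatrix'_id] at h2
    have h3 : LinearMap.toMatrix' (Matrix.vecMulLinear (Matrix.of f)) = (Matrix.of f).transpose := by
      ext i j
      simp [LinearMap.toMatrix'_apply, Matrix.vecMul]
    rw [h3] at h2
    simpa using congrArg Matrix.transpose h2
  obtain ⟨c, hc, B', hB'⟩ := exists_smul_eq_map_residueField p B
  have hdet : algebraMap R p.asIdeal.ResidueField (A * B').det ≠ 0 := by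
    rw [RingHom.map_det, RingHom.mapMatrix_apply, Matrix.map_mul, hA, hB', Matrix.mul_smul, hB,
      Matrix.det_smul, Matrix.det_one, mul_one]
    exact pow_ne_zero _ hc
  refine ⟨PrimeSpectrum.basicOpen (A * B').det, fun q hq => hr.trans ?_,
    (PrimeSpectrum.basicOpen _).2, ?_⟩
  · have hq' : ((A.map (algebraMap R q.asIdeal.ResidueField)) *
        (B'.map (algebraMap R q.asIdeal.ResidueField))).det ≠ 0 := by
      rw [← Matrix.map_mul, ← RingHom.mapMatrix_apply, ← RingHom.map_det, ne_eq,
        Ideal.algebraMap_residueField_eq_zero]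
      exact hq
    have hli' : LinearIndependent q.asIdeal.ResidueField
        (fun i => A.map (algebraMap R q.asIdeal.ResidueField) i) :=
      LinearIndependent.of_comp
        (Matrix.vecMulLinear (B'.map (algebraMap R q.asIdeal.ResidueField)))
        (Matrix.linearIndependent_rows_of_det_ne_zero hq')
    have h := finrank_span_eq_card hli'
    rw [Fintype.card_fin] at h
    rw [← h]
    refine Set.finrank_mono ?_
    rintro _ ⟨i, rfl⟩
    exact ⟨s i, rfl⟩
  · rw [ne_eq, Ideal.algebraMap_residueField_eq_zero] at hdet
    exact hdet

/-- A closed subset of the spectrum of a Noetherian ring has finitely many minimal points. -/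
lemma finite_minimal_of_isClosed {R : Type*} [CommRing R] [IsNoetherianRing R]
    {Z : Set (PrimeSpectrum R)} (hZ : IsClosed Z) : {p | Minimal (· ∈ Z) p}.Finite := by
  obtain ⟨I, rfl⟩ := (PrimeSpectrum.isClosed_iff_zeroLocus_ideal Z).mp hZ
  refine Set.Finite.of_finite_image (f := PrimeSpectrum.asIdeal)
    ((I.finite_minimalPrimes_of_isNoetherianRing R).subset ?_)
    (fun _ _ _ _ h => PrimeSpectrum.ext h)
  rintro _ ⟨p, hp, rfl⟩
  exact ⟨⟨p.2, hp.1⟩, fun q hq hqp => hp.2 (y := ⟨q, hq.1⟩) hq.2 hqp⟩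

/-- Simultaneous avoidance of affine hyperplanes over the residue fields of finitely many
primes. -/
lemma exists_avoiding_hyperplanes {R : Type*} [CommRing R] {n : ℕ}
    (c : ∀ p : PrimeSpectrum R, Fin (n + 1) → p.asIdeal.ResidueField)
    (S : Finset (PrimeSpectrum R)) (hc : ∀ p ∈ S, c p ≠ 0) :
    ∃ a : Fin n → R, ∀ p ∈ S, ∑ i, c p i.succ * algebraMap R _ (a i) ≠ c p 0 := by
  classical
  induction S using Finset.strongInduction with
  | H S ih =>
  rcases S.eq_empty_or_nonempty with rfl | hS
  · simp
  obtain ⟨p, hpS, hmin⟩ := S.exists_minimal hS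
  obtain ⟨a, ha⟩ := ih _ (Finset.erase_ssubset hpS)
    (fun q hq => hc q (Finset.mem_of_mem_erase hq))
  by_cases hp : ∑ i, c p i.succ * algebraMap R _ (a i) = c p 0
  swap
  · refine ⟨a, fun q hq => ?_⟩
    rcases eq_or_ne q p with rfl | hqp
    · exact hp
    · exact ha q (Finset.mem_erase.mpr ⟨hqp, hq⟩)
  obtain ⟨i, hi⟩ : ∃ i : Fin n, c p i.succ ≠ 0 := by
    by_contra! h
    refine hc p hpS (funext fun j => ?_)
    refine Fin.cases ?_ h j
    simpa [h] using hp.symm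
  obtain ⟨r, hr, hrp⟩ : ∃ r ∈ (S.erase p).inf PrimeSpectrum.asIdeal, r ∉ p.asIdeal := by
    by_contra! h
    obtain ⟨q, hq, hqp⟩ := (Ideal.IsPrime.inf_le' p.2).mp h
    rw [Finset.mem_erase] at hq
    exact hq.1 (le_antisymm hqp (hmin hq.2 hqp))
  refine ⟨a + Pi.single i r, fun q hq => ?_⟩
  have key : ∑ j : Fin n, c q j.succ * algebraMap R _ ((a + Pi.single i r : Fin n → R) j) =
      ∑ j : Fin n, c q j.succ * algebraMap R _ (a j) +
        c q i.succ * algebraMap R q.asIdeal.ResidueField r := by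
    simp only [Pi.add_apply, map_add, mul_add, Finset.sum_add_distrib]
    simp [Pi.single_apply, apply_ite (algebraMap R q.asIdeal.ResidueField)]
  rw [key]
  rcases eq_or_ne q p with rfl | hqp
  · rw [hp]
    simpa [hi] using hrp
  · have hqe := Finset.mem_erase.mpr ⟨hqp, hq⟩
    have : algebraMap R q.asIdeal.ResidueField r = 0 :=
      Ideal.algebraMap_residueField_eq_zero.mpr (Finset.inf_le (f := PrimeSpectrum.asIdeal) hqe hr)
    simpa [this] using ha q hqe

section

variable {K V : Type*} [Field K] [AddCommGroup V] [Module K V] {n : ℕ}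

lemma span_range_le_sup_span_shift (w : Fin (n + 1) → V) (b : Fin n → K) :
    Submodule.span K (Set.range w) ≤
      Submodule.span K (Set.range fun i : Fin n => w i.succ + b i • w 0) ⊔
        Submodule.span K {w 0} := by
  have h0 : w 0 ∈ Submodule.span K (Set.range fun i : Fin n => w i.succ + b i • w 0) ⊔
        Submodule.span K {w 0} :=
    Submodule.mem_sup_right (Submodule.mem_span_singleton_self _)
  rw [Submodule.span_le]
  rintro _ ⟨j, rfl⟩
  refine Fin.cases h0 (fun i => ?_) j
  have h1 : w i.succ + b i • w 0 ∈
      Submodule.span K (Set.range fun i : Fin n => w i.succ + b i • w 0) ⊔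
        Submodule.span K {w 0} :=
    Submodule.mem_sup_left (Submodule.subset_span ⟨i, rfl⟩)
  simpa using Submodule.sub_mem _ h1 (Submodule.smul_mem _ (b i) h0)

lemma finrank_range_le_finrank_shift_add_one [FiniteDimensional K V]
    (w : Fin (n + 1) → V) (b : Fin n → K) :
    Set.finrank K (Set.range w) ≤
      Set.finrank K (Set.range fun i : Fin n => w i.succ + b i • w 0) + 1 := by
  refine (Submodule.finrank_mono (span_range_le_sup_span_shift w b)).trans ?_
  refine (Submodule.finrank_add_le_finrank_add_finrank _ _).trans ?_
  exact Nat.add_le_add_left ((finrank_span_le_card _).trans (by simp)) _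

lemma finrank_range_le_finrank_shift [FiniteDimensional K V] (w : Fin (n + 1) → V) (b : Fin n → K)
    (c : Fin (n + 1) → K) (hc : ∑ i, c i • w i = 0) (hb : ∑ i, c (Fin.succ i) * b i ≠ c 0) :
    Set.finrank K (Set.range w) ≤
      Set.finrank K (Set.range fun i : Fin n => w i.succ + b i • w 0) := by
  refine (Submodule.finrank_mono (span_range_le_sup_span_shift w b)).trans
    (le_of_eq (congrArg (fun W : Submodule K V => Module.finrank K W) (sup_eq_left.mpr ?_)))
  rw [Submodule.span_singleton_le_iff_mem]
  have h : (∑ i, c (Fin.succ i) * b i - c 0) • w 0 =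
      ∑ i : Fin n, c i.succ • (w i.succ + b i • w 0) := by
    rw [Fin.sum_univ_succ] at hc
    simp only [smul_add, Finset.sum_add_distrib, smul_smul, sub_smul, Finset.sum_smul]
    rw [sub_eq_iff_eq_add, add_right_comm, add_comm (∑ i, _ • w _), hc, zero_add]
  rw [← Submodule.smul_mem_iff _ (sub_ne_zero.mpr hb), h]
  exact Submodule.sum_mem _ fun i _ =>
    Submodule.smul_mem _ _ (Submodule.subset_span ⟨i, rfl⟩)

end

/-- **Basic element reduction**: one vector can be eliminated by adding multiples of it to the
others, keeping the fibre rank above the expected bound. -/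
lemma exists_shift_le_fibreRank {R κ : Type*} [CommRing R] [IsNoetherianRing R] [Finite κ]
    {n : ℕ} (u : Fin (n + 2) → κ → R)
    (hu : ∀ p, min ((n + 2 : ℕ) : ℕ∞) (Order.coheight p + 1) ≤ fibreRank u p) :
    ∃ a : Fin (n + 1) → R, ∀ p, min ((n + 1 : ℕ) : ℕ∞) (Order.coheight p + 1) ≤
      fibreRank (fun i : Fin (n + 1) => u i.succ + a i • u 0) p := by
  classical
  let w (p : PrimeSpectrum R) : Fin (n + 2) → κ → p.asIdeal.ResidueField :=
    fun i j => algebraMap R p.asIdeal.ResidueField (u i j)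
  have hw (p : PrimeSpectrum R) (a : Fin (n + 1) → R) :
      fibreRank (fun i : Fin (n + 1) => u i.succ + a i • u 0) p =
        Set.finrank p.asIdeal.ResidueField (Set.range fun i : Fin (n + 1) =>
          w p i.succ + algebraMap R p.asIdeal.ResidueField (a i) • w p 0) := by
    unfold fibreRank
    congr! 3 with i
    ext j
    simp [w, Algebra.smul_def]
  let B : Set (PrimeSpectrum R) :=
    {p | fibreRank u p ≤ n + 1 ∧ (fibreRank u p : ℕ∞) = Order.coheight p + 1}
  have hB : B.Finite := by
    have hclosed (t : ℕ) : IsClosed {p | fibreRank u p ≤ t} := by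
      rw [← isOpen_compl_iff]
      convert! isOpen_le_fibreRank u (t + 1) using 1
      ext p
      exact not_le (a := fibreRank u p) (b := t)
    refine Set.Finite.subset ((Set.finite_Iic (n + 1)).biUnion fun t _ =>
      finite_minimal_of_isClosed (hclosed t)) ?_
    rintro p ⟨hp, hpc⟩
    simp only [Set.mem_iUnion]
    refine ⟨fibreRank u p, hp, le_refl (fibreRank u p), fun q hq hqp => ?_⟩
    by_contra hpq
    have h1 := Order.coheight_add_one_le (lt_of_le_not_ge hqp hpq)
    rw [← hpc] at h1
    have h2 : (fibreRank u q : ℕ∞) ≤ fibreRank u p := by exact_mod_cast hq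
    rcases min_le_iff.mp ((hu q).trans h2) with h | h
    · have : n + 2 ≤ fibreRank u p := by exact_mod_cast h
      omega
    · have h3 : ((fibreRank u p : ℕ∞) + 1) ≤ fibreRank u p :=
        (add_le_add_left h1 1).trans h
      have : fibreRank u p + 1 ≤ fibreRank u p := by exact_mod_cast h3
      omega
  have hdep (p : PrimeSpectrum R) : ∃ c : Fin (n + 2) → p.asIdeal.ResidueField,
      ∑ i, c i • w p i = 0 ∧ (p ∈ B → c ≠ 0) := by
    by_cases hp : p ∈ B
    · have : ¬ LinearIndependent p.asIdeal.ResidueField (w p) := by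
        rw [linearIndependent_iff_card_eq_finrank_span, Fintype.card_fin]
        have h1 : Set.finrank p.asIdeal.ResidueField (Set.range (w p)) ≤ n + 1 := hp.1
        omega
      obtain ⟨c, hc, i, hi⟩ := Fintype.not_linearIndependent_iff.mp this
      exact ⟨c, hc, fun _ h => hi (congrFun h i)⟩
    · exact ⟨0, by simp, fun h => absurd h hp⟩
  choose c hc hc0 using hdep
  obtain ⟨a, ha⟩ := exists_avoiding_hyperplanes c hB.toFinset
    (fun p hp => hc0 p (hB.mem_toFinset.mp hp))
  refine ⟨a, fun p => ?_⟩
  rw [hw]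
  by_cases hp : p ∈ B
  · have h1 := finrank_range_le_finrank_shift (w p) _ (c p) (hc p)
      (ha p (hB.mem_toFinset.mpr hp))
    refine le_trans (le_trans ?_ (hu p)) (Nat.cast_le.mpr h1)
    exact min_le_min_right _ (Nat.cast_le.mpr (by omega))
  · have h1 : fibreRank u p ≤ _ := finrank_range_le_finrank_shift_add_one (w p)
      (fun i => algebraMap R p.asIdeal.ResidueField (a i))
    generalize Set.finrank p.asIdeal.ResidueField (Set.range fun i : Fin (n + 1) =>
          w p i.succ + algebraMap R p.asIdeal.ResidueField (a i) • w p 0) = r at *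
    rcases Nat.lt_or_ge (n + 1) (fibreRank u p) with h | h
    · exact min_le_iff.mpr (Or.inl (Nat.cast_le.mpr (by omega)))
    · have h2 : Order.coheight p + 1 ≤ fibreRank u p := by
        refine (min_le_iff.mp (hu p)).resolve_left fun h' => ?_
        have : n + 2 ≤ fibreRank u p := by exact_mod_cast h'
        omega
      have h3 : Order.coheight p + 1 < fibreRank u p :=
        lt_of_le_of_ne h2 fun h' => hp ⟨h, h'.symm⟩
      refine min_le_iff.mpr (Or.inr ?_)
      have h4 := h3.trans_le (Nat.cast_le.mpr h1)
      push_cast at h4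
      exact Order.le_of_lt_add_one h4

lemma exists_mem_span_dotProduct_eq_one {R κ : Type*} [CommRing R] [IsNoetherianRing R]
    [Fintype κ] {n : ℕ} (u : Fin (n + 1) → κ → R)
    (hu : ∀ p, min ((n + 1 : ℕ) : ℕ∞) (Order.coheight p + 1) ≤ fibreRank u p) :
    ∃ x ∈ Submodule.span R (Set.range u), ∃ g : κ → R, ∑ j, g j * x j = 1 := by
  induction n with
  | zero =>
    refine ⟨u 0, Submodule.subset_span ⟨0, rfl⟩, ?_⟩
    have htop : Ideal.span (Set.range (u 0)) = ⊤ := by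
      by_contra hne
      obtain ⟨P, hP, hle⟩ := Ideal.exists_le_maximal _ hne
      let p : PrimeSpectrum R := ⟨P, hP.isPrime⟩
      have h1 : 1 ≤ fibreRank u p := by
        have h := hu p
        rw [min_eq_left (by simp)] at h
        exact_mod_cast h
      have h2 : fibreRank u p = 0 := by
        refine Submodule.finrank_eq_zero.mpr (Submodule.span_eq_bot.mpr ?_)
        rintro _ ⟨i, rfl⟩
        ext j
        rw [show i = 0 from Fin.fin_one_eq_zero i]
        exact Ideal.algebraMap_residueField_eq_zero.mpr (hle (Ideal.subset_span ⟨j, rfl⟩))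
      omega
    obtain ⟨g, hg⟩ := (Ideal.mem_span_range_iff_exists_fun).mp
      ((Ideal.eq_top_iff_one _).mp htop)
    exact ⟨g, hg⟩
  | succ n ih =>
    obtain ⟨a, ha⟩ := exists_shift_le_fibreRank u hu
    obtain ⟨x, hx, hg⟩ := ih _ ha
    refine ⟨x, Submodule.span_le.mpr ?_ hx, hg⟩
    rintro _ ⟨i, rfl⟩
    exact Submodule.add_mem _ (Submodule.subset_span ⟨_, rfl⟩)
      (Submodule.smul_mem _ _ (Submodule.subset_span ⟨_, rfl⟩))

open TensorProduct in
/-- If `f` is a surjection from a free module onto `P` with section `s`, the images of the basis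
vectors under `s ∘ f` have fibre rank at least the rank of `P`. -/
lemma rankAtStalk_le_fibreRank {R P : Type*} [CommRing R] [AddCommGroup P] [Module R P]
    [Module.Finite R P] [Module.Projective R P] {m : ℕ}
    (f : (Fin m → R) →ₗ[R] P) (s : P →ₗ[R] (Fin m → R)) (hfs : f ∘ₗ s = LinearMap.id)
    (p : PrimeSpectrum R) :
    Module.rankAtStalk P p ≤ fibreRank (fun i => s (f (Pi.single i 1))) p := by
  classical
  rw [Module.rankAtStalk_eq]
  let k := p.asIdeal.ResidueField
  let T : k ⊗[R] P →ₗ[k] (Fin m → k) :=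
    (TensorProduct.piScalarRight R k k (Fin m)).toLinearMap ∘ₗ s.baseChange k
  have hT : Function.Injective T := by
    refine (TensorProduct.piScalarRight R k k (Fin m)).injective.comp
      (Function.LeftInverse.injective (g := f.baseChange k) fun x => ?_)
    rw [← LinearMap.comp_apply, ← LinearMap.baseChange_comp, hfs, LinearMap.baseChange_id,
      LinearMap.id_apply]
  have hspan : Submodule.span R (Set.range fun i => f (Pi.single i 1)) = ⊤ := by
    have hf : LinearMap.range f = ⊤ :=
      LinearMap.range_eq_top.mpr fun x => ⟨s x, LinearMap.congr_fun hfs x⟩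
    rw [← hf, LinearMap.range_eq_map, ← (Pi.basisFun R (Fin m)).span_eq, Submodule.map_span,
      ← Set.range_comp]
    congr! 2
    ext i
    simp
  have hk : (⊤ : Submodule k (k ⊗[R] P)) =
      Submodule.span k (TensorProduct.mk R k P 1 '' Set.range fun i => f (Pi.single i 1)) := by
    rw [← Submodule.baseChange_span, hspan, Submodule.baseChange_top]
  change Module.finrank k (k ⊗[R] P) ≤ _
  rw [← LinearMap.finrank_range_of_inj hT, LinearMap.range_eq_map, hk, Submodule.map_span,
    ← Set.range_comp, ← Set.range_comp]
  have hu : (T ∘ TensorProduct.mk R k P 1 ∘ fun i => f (Pi.single i 1)) =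
      fun i j => algebraMap R k (s (f (Pi.single i 1)) j) := by
    ext i j
    simp [T, Algebra.algebraMap_eq_smul_one]
  rw [hu]
  exact le_rfl

/-- **Serre's splitting theorem**, in the form of the existence of a unimodular element. -/
theorem exists_unimodular {R P : Type*} [CommRing R] [IsNoetherianRing R] [Nontrivial R]
    [AddCommGroup P] [Module R P] [Module.Finite R P] [Module.Projective R P]
    (h : ∀ p : PrimeSpectrum R, Order.coheight p + 1 ≤ (Module.rankAtStalk P p : ℕ∞)) :
    ∃ (x : P) (g : P →ₗ[R] R), g x = 1 := by
  obtain ⟨m, f, hf⟩ := Module.Finite.exists_fin' R P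
  obtain ⟨s, hs⟩ := Module.projective_lifting_property f LinearMap.id hf
  have hu p : Order.coheight p + 1 ≤ (fibreRank (fun i => s (f (Pi.single i 1))) p : ℕ∞) :=
    (h p).trans (Nat.cast_le.mpr (rankAtStalk_le_fibreRank f s hs p))
  cases m with
  | zero =>
    obtain ⟨p⟩ : Nonempty (PrimeSpectrum R) := inferInstance
    have := hf.subsingleton
    simpa using h p
  | succ n =>
    obtain ⟨x, hx, g, hg⟩ := exists_mem_span_dotProduct_eq_one _
      (fun p => (min_le_right _ _).trans (hu p))
    have hx' : x ∈ LinearMap.range s := by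
      refine Submodule.span_le.mpr ?_ hx
      rintro _ ⟨i, rfl⟩
      exact ⟨_, rfl⟩
    obtain ⟨y, rfl⟩ := hx'
    exact ⟨y, Fintype.linearCombination R g ∘ₗ s, by
      simpa [Fintype.linearCombination_apply, mul_comm] using hg⟩

/-- A module has a free direct summand of rank `k`, expressed through a split injection. -/
theorem exists_split_free {R : Type*} [CommRing R] [IsNoetherianRing R] [Nontrivial R]
    (d : ℕ) (hd : ringKrullDim R ≤ d) (k : ℕ) {P : Type*} [AddCommGroup P] [Module R P]
    [Module.Finite R P] [Module.Projective R P]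
    (h : ∀ p : PrimeSpectrum R, k + d ≤ Module.rankAtStalk P p) :
    ∃ (i : (Fin k → R) →ₗ[R] P) (π : P →ₗ[R] (Fin k → R)), π ∘ₗ i = LinearMap.id := by
  induction k generalizing P with
  | zero => exact ⟨0, 0, Subsingleton.elim _ _⟩
  | succ k ih =>
    obtain ⟨x, g, hg⟩ := exists_unimodular (P := P) fun p => by
      have h1 : (Order.coheight p : WithBot ℕ∞) ≤ (d : ℕ∞) :=
        (Order.coheight_le_krullDim p).trans hd
      have h2 : Order.coheight p ≤ (d : ℕ∞) := WithBot.coe_le_coe.mp h1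
      refine (add_le_add_left h2 1).trans ?_
      have := h p
      exact_mod_cast (by omega : d + 1 ≤ Module.rankAtStalk P p)
    let r : P →ₗ[R] LinearMap.ker g := LinearMap.codRestrict _
      (LinearMap.id - LinearMap.toSpanSingleton R P x ∘ₗ g) fun y => by simp [hg]
    have hr (y : LinearMap.ker g) : r y = y := Subtype.ext (by simp [r])
    have hproj : Module.Projective R (LinearMap.ker g) :=
      Module.Projective.of_split (LinearMap.ker g).subtype r (LinearMap.ext hr)
    let e : P ≃ₗ[R] R × LinearMap.ker g :=
      { g.prod r with
        invFun := fun z => z.1 • x + z.2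
        left_inv := fun y => by simp [r]
        right_inv := fun z => Prod.ext (by simp [hg]) (Subtype.ext (by simp [r, hg])) }
    obtain ⟨i, π, hi⟩ := ih (P := LinearMap.ker g) fun p => by
      have h1 := h p
      rw [Module.rankAtStalk_eq_of_equiv e, Module.rankAtStalk_prod, Module.rankAtStalk_self] at h1
      simp only [Pi.add_apply, Pi.one_apply] at h1
      omega
    let c : (R × (Fin k → R)) ≃ₗ[R] (Fin (k + 1) → R) := Fin.consLinearEquiv R (fun _ => R)
    refine ⟨e.symm.toLinearMap ∘ₗ (LinearMap.id.prodMap i) ∘ₗ c.symm.toLinearMap,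
      c.toLinearMap ∘ₗ (LinearMap.id.prodMap π) ∘ₗ e.toLinearMap, LinearMap.ext fun y => ?_⟩
    have hi' z : π (i z) = z := LinearMap.congr_fun hi z
    simp [hi']

lemma frk_set_subset {R M : Type*} [CommRing R] [Nontrivial R] [AddCommGroup M] [Module R M] :
    {n : ℕ | ∃ N N' : Submodule R M, IsCompl N N' ∧ Nonempty (N ≃ₗ[R] (Fin n → R))} ⊆
      {n : ℕ | ∃ Ω N : Submodule R M, IsCompl Ω N ∧ Module.Projective R Ω ∧
        ∀ (P : Ideal R) (hP : P.IsPrime),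
          n ≤ Module.finrank (Localization (@Ideal.primeCompl R _ P hP))
            (LocalizedModule (@Ideal.primeCompl R _ P hP) Ω)} := by
  rintro n ⟨N, N', hN, ⟨e⟩⟩
  refine ⟨N, N', hN, Module.Projective.of_equiv e.symm, fun P hP => ?_⟩
  change n ≤ Module.rankAtStalk N ⟨P, hP⟩
  rw [Module.rankAtStalk_eq_of_equiv e, Module.rankAtStalk_eq_finrank_of_free]
  simp

lemma finite_of_isCompl {R M : Type*} [Ring R] [AddCommGroup M] [Module R M] [Module.Finite R M]
    {Ω N : Submodule R M} (h : IsCompl Ω N) : Module.Finite R Ω :=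
  Module.Finite.of_surjective (Submodule.projectionOnto Ω N h)
    (Submodule.projectionOnto_surjective h)

lemma bddAbove_projMinRank_set {R M : Type*} [CommRing R] [Nontrivial R] [AddCommGroup M]
    [Module R M] [Module.Finite R M] :
    BddAbove {n : ℕ | ∃ Ω N : Submodule R M, IsCompl Ω N ∧ Module.Projective R Ω ∧
      ∀ (P : Ideal R) (hP : P.IsPrime),
        n ≤ Module.finrank (Localization (@Ideal.primeCompl R _ P hP))
          (LocalizedModule (@Ideal.primeCompl R _ P hP) Ω)} := by
  obtain ⟨m, f, hf⟩ := Module.Finite.exists_fin' R M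
  obtain ⟨p⟩ : Nonempty (PrimeSpectrum R) := inferInstance
  refine ⟨m, ?_⟩
  rintro n ⟨Ω, N, hΩ, hproj, hn⟩
  have hsurj : Function.Surjective (Submodule.projectionOnto Ω N hΩ ∘ₗ f) :=
    (Submodule.projectionOnto_surjective hΩ).comp hf
  have hfin := finite_of_isCompl hΩ
  obtain ⟨s, hs⟩ := Module.projective_lifting_property _ LinearMap.id hsurj
  refine (hn p.asIdeal p.2).trans ((rankAtStalk_le_fibreRank _ s hs p).trans ?_)
  exact (finrank_range_le_card _).trans (by simp)

/-- The range of a split injection is a direct summand isomorphic to its source. -/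
lemma exists_isCompl_of_split {R M F : Type*} [Ring R] [AddCommGroup M] [Module R M]
    [AddCommGroup F] [Module R F] (i : F →ₗ[R] M) (π : M →ₗ[R] F) (h : π ∘ₗ i = LinearMap.id) :
    ∃ N N' : Submodule R M, IsCompl N N' ∧ Nonempty (N ≃ₗ[R] F) := by
  have hπ x : π (i x) = x := LinearMap.congr_fun h x
  have hidem : IsIdempotentElem (i ∘ₗ π) := LinearMap.ext fun x => by simp [hπ]
  have hrange : LinearMap.range (i ∘ₗ π) = LinearMap.range i :=
    LinearMap.range_comp_of_range_eq_top _
      (LinearMap.range_eq_top.mpr (Function.RightInverse.surjective hπ))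
  exact ⟨LinearMap.range i, _, hrange ▸ LinearMap.IsIdempotentElem.isCompl hidem,
    ⟨(LinearEquiv.ofInjective i (Function.LeftInverse.injective hπ)).symm⟩⟩

/-- For a Noetherian ring of finite Krull dimension `d` and a finitely generated module `M`,
the maximal rank `a(M)` of a free direct summand and the maximal min-rank `ã(M)` of a
projective direct summand satisfy `a(M) ≤ ã(M) ≤ a(M) + d`. -/
theorem frk_le_projMinRank_le {R : Type*} [CommRing R] [IsNoetherianRing R] (d : ℕ)
    (hd : ringKrullDim R = d) (M : Type*) [AddCommGroup M] [Module R M]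
    [Module.Finite R M] :
    frk R M ≤ projMinRank R M ∧ projMinRank R M ≤ frk R M + d := by
  have : Nontrivial R := by
    by_contra h
    rw [not_nontrivial_iff_subsingleton] at h
    rw [ringKrullDim_eq_bot_of_subsingleton] at hd
    exact WithBot.bot_ne_coe hd
  have hzero : (0 : ℕ) ∈ {n : ℕ | ∃ N N' : Submodule R M, IsCompl N N' ∧
      Nonempty (N ≃ₗ[R] (Fin n → R))} :=
    ⟨⊥, ⊤, isCompl_bot_top, ⟨0, 0, fun _ => Subsingleton.elim _ _, fun _ => Subsingleton.elim _ _⟩⟩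
  refine ⟨csSup_le_csSup bddAbove_projMinRank_set ⟨0, hzero⟩ frk_set_subset,
    csSup_le ⟨0, frk_set_subset hzero⟩ ?_⟩
  rintro n ⟨Ω, N, hΩ, hproj, hn⟩
  rcases le_total n d with hnd | hnd
  · omega
  obtain ⟨k, rfl⟩ := Nat.exists_eq_add_of_le' hnd
  have hfin := finite_of_isCompl hΩ
  obtain ⟨i, π, hi⟩ := exists_split_free d hd.le k (P := Ω) fun p => hn p.asIdeal p.2
  refine Nat.add_le_add_right (le_csSup (bddAbove_projMinRank_set.mono frk_set_subset) ?_) d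
  exact exists_isCompl_of_split (Ω.subtype ∘ₗ i) (π ∘ₗ Submodule.projectionOnto Ω N hΩ) <| by
    ext1 j
    ext1
    simpa using LinearMap.congr_fun hi (Pi.single j 1)
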